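/- For n ∈ {5, 6}, the graceful chromatic number of the diagonal ladder DL_n equals 8. -/

import Mathlib

/-- A graceful `k`-coloring of `G`: a proper vertex coloring with colors in
`{1, ..., k}` whose induced edge coloring `f*(uv) = |f u - f v|` is a proper
edge coloring. -/
def IsGracefulColoring {V : Type*} (G : SimpleGraph V) (k : ℕ) (f : V → ℕ) : Prop :=
  (∀ v, 1 ≤ f v ∧ f v ≤ k) ∧
  (∀ ⦃u v⦄, G.Adj u v → f u ≠ f v) ∧
  (∀ ⦃u v w⦄, G.Adj u v → G.Adj u w → v ≠ w →
    ((f u : ℤ) - f v).natAbs ≠ ((f u : ℤ) - f w).natAbs)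

/-- The graceful chromatic number: the least `k` admitting a graceful `k`-coloring. -/
noncomputable def gracefulChromaticNumber {V : Type*} (G : SimpleGraph V) : ℕ :=
  sInf {k | ∃ f : V → ℕ, IsGracefulColoring G k f}

/-- The diagonal ladder `DL_n` (the strong product `P_n ⊠ P_2`): the closed ladder
together with both diagonals `x_i y_{i+1}` and `y_i x_{i+1}`. -/
def diagonalLadder (n : ℕ) : SimpleGraph (Fin 2 × Fin n) :=
  SimpleGraph.fromRel (fun a b =>
    (a.1 = b.1 ∧ a.2.val + 1 = b.2.val) ∨
    (a.1 ≠ b.1 ∧ (a.2 = b.2 ∨ a.2.val + 1 = b.2.val ∨ b.2.val + 1 = a.2.val)))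

lemma diagonalLadder_adj {n : ℕ} {a b : Fin 2 × Fin n} :
    (diagonalLadder n).Adj a b ↔ a ≠ b ∧ a.2.val ≤ b.2.val + 1 ∧ b.2.val ≤ a.2.val + 1 := by
  obtain ⟨a, i⟩ := a
  obtain ⟨b, j⟩ := b
  simp only [diagonalLadder, SimpleGraph.fromRel_adj, ne_eq, Prod.mk.injEq, Fin.ext_iff]
  omega

instance (n : ℕ) : DecidableRel (diagonalLadder n).Adj :=
  fun _ _ => decidable_of_iff' _ diagonalLadder_adj

/-- A shorter diagonal ladder sits inside a longer one as its first rungs. -/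
def diagonalLadderCastLE {m n : ℕ} (h : m ≤ n) : diagonalLadder m ↪g diagonalLadder n where
  toFun a := (a.1, Fin.castLE h a.2)
  inj' a b hab := by simpa [Prod.ext_iff] using hab
  map_rel_iff' := by
    intro a b
    simp [diagonalLadder_adj, Prod.ext_iff, DFunLike.coe]

namespace IsGracefulColoring

variable {V W : Type*} {G : SimpleGraph V} {H : SimpleGraph W} {k : ℕ} {f : V → ℕ}

lemma mono {l : ℕ} (hf : IsGracefulColoring G k f) (hkl : k ≤ l) : IsGracefulColoring G l f :=
  ⟨fun v => ⟨(hf.1 v).1, (hf.1 v).2.trans hkl⟩, hf.2⟩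

lemma comp_embedding (hf : IsGracefulColoring G k f) (e : H ↪g G) :
    IsGracefulColoring H k (f ∘ e) :=
  ⟨fun v => hf.1 (e v), fun _ _ h => hf.2.1 (e.map_adj_iff.2 h),
    fun _ _ _ h h' hne =>
      hf.2.2 (e.map_adj_iff.2 h) (e.map_adj_iff.2 h') (e.injective.ne hne)⟩

/-- Two distinct vertices with a common neighbor receive different colors. -/
lemma ne_of_common_neighbor (hf : IsGracefulColoring G k f) {u v w : V} (hv : G.Adj u v)
    (hw : G.Adj u w) (hvw : v ≠ w) : f v ≠ f w := by
  intro h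
  exact hf.2.2 hv hw hvw (by rw [h])

/-- The differences at a vertex colored `c` are distinct and at most `max (c - 1) (k - c)`. -/
lemma card_le_of_subset_neighborSet (hf : IsGracefulColoring G k f) {u : V} {s : Finset V}
    (hs : ∀ v ∈ s, G.Adj u v) : s.card ≤ max (f u - 1) (k - f u) := by
  have hcard := Finset.card_le_card_of_injOn (s := s)
    (t := Finset.Icc 1 (max (f u - 1) (k - f u))) (fun v => ((f u : ℤ) - f v).natAbs)
    (fun v hv => by
      have hne := hf.2.1 (hs v hv)
      have hu := hf.1 u
      have hv' := hf.1 v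
      simp only [Finset.coe_Icc, Set.mem_Icc]
      omega)
    (fun v hv w hw h => by
      by_contra hne
      exact hf.2.2 (hs v hv) (hs w hw) hne h)
  simpa using hcard

end IsGracefulColoring

/-- The six inner vertices of `DL_5` have degree five, which leaves them only four of the colors
`1, …, 7`; but they are pairwise adjacent or have a common neighbor. -/
lemma not_isGracefulColoring_diagonalLadder_five (f : Fin 2 × Fin 5 → ℕ) :
    ¬ IsGracefulColoring (diagonalLadder 5) 7 f := by
  intro hf
  let inner : Finset (Fin 2 × Fin 5) := Finset.univ ×ˢ {1, 2, 3}
  have hdeg : ∀ u ∈ inner, ((diagonalLadder 5).neighborFinset u).card = 5 := by decide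
  have hclose : ∀ v ∈ inner, ∀ w ∈ inner, v ≠ w →
      (diagonalLadder 5).Adj v w ∨
        ∃ u, (diagonalLadder 5).Adj u v ∧ (diagonalLadder 5).Adj u w := by decide
  have hcard := Finset.card_le_card_of_injOn (s := inner) (t := {1, 2, 6, 7}) f
    (fun u hu => by
      have h := hf.card_le_of_subset_neighborSet (u := u)
        (s := (diagonalLadder 5).neighborFinset u) (fun v hv => by simpa using hv)
      rw [hdeg u hu] at h
      have hu := hf.1 u
      simp only [Finset.coe_insert, Finset.coe_singleton, Set.mem_insert_iff,
        Set.mem_singleton_iff]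
      omega)
    (fun v hv w hw h => by
      by_contra hne
      rcases hclose v hv w hw hne with hadj | ⟨u, huv, huw⟩
      · exact hf.2.1 hadj h
      · exact hf.ne_of_common_neighbor huv huw hne h)
  exact absurd hcard (by decide)

set_option maxRecDepth 10000 in
lemma exists_isGracefulColoring_diagonalLadder_six :
    ∃ f, IsGracefulColoring (diagonalLadder 6) 8 f := by
  refine ⟨fun a => ![![4, 2, 1, 3, 2, 4], ![5, 7, 6, 8, 7, 5]] a.1 a.2, ?_, ?_, ?_⟩ <;> decide

theorem gracefulChromaticNumber_diagonalLadder_small (n : ℕ) (hn : n = 5 ∨ n = 6) :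
    gracefulChromaticNumber (diagonalLadder n) = 8 := by
  have h5 : 5 ≤ n := by omega
  have h6 : n ≤ 6 := by omega
  obtain ⟨g, hg⟩ := exists_isGracefulColoring_diagonalLadder_six
  have hmem : 8 ∈ {k | ∃ f, IsGracefulColoring (diagonalLadder n) k f} :=
    ⟨_, hg.comp_embedding (diagonalLadderCastLE h6)⟩
  refine le_antisymm (Nat.sInf_le hmem) (le_csInf ⟨8, hmem⟩ ?_)
  rintro k ⟨f, hf⟩
  by_contra! hk
  exact not_isGracefulColoring_diagonalLadder_five _
    ((hf.comp_embedding (diagonalLadderCastLE h5)).mono (by omega))
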